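/- Let G be a finitely generated abelian group, X = (x_1,…,x_N) a finite list of elements of G, and q ∈ ℤ_M(X). Then χ_X(q) = (−1)^{rk(X)}·q^{rk(G)−rk(X)}·T_X(1−q, 0) and χ*_X(q) = (−1)^{N−rk(X)}·T_X(0, 1−q). -/

import Mathlib

open Finset

noncomputable section

variable {G : Type*} [AddCommGroup G] {N : ℕ}

/-- The subgroup `⟨x_i : i ∈ A⟩` of `G`. -/
def genSub (X : Fin N → G) (A : Finset (Fin N)) : AddSubgroup G :=
  AddSubgroup.closure (X '' (A : Set (Fin N)))

/-- The torsion-free rank of a finitely generated abelian group. -/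
def tfRank (H : Type*) [AddCommGroup H] : ℕ := Module.finrank ℤ H

/-- `rk(A)` = torsion-free rank of the subgroup `⟨x_i : i ∈ A⟩`. -/
def rkA (X : Fin N → G) (A : Finset (Fin N)) : ℕ := tfRank (genSub X A)

/-- `m(A)` = order of the torsion subgroup `G_A` of `G/⟨x_i : i ∈ A⟩`. -/
def mA (X : Fin N → G) (A : Finset (Fin N)) : ℕ :=
  Nat.card (AddCommGroup.torsion (G ⧸ genSub X A))

/-- The subgroup `qG = {q•g : g ∈ G}` of `G`. -/
def qMul (q : ℕ) (G : Type*) [AddCommGroup G] : AddSubgroup G :=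
  AddSubgroup.map (AddMonoidHom.mk' (fun g : G => q • g) (fun a b => smul_add q a b)) ⊤

/-- `χ*_{X|_A}(q)`: the number of nowhere-zero `q`-flows on the sublist `X|_A`, i.e. of
`ψ : A → (ℤ/qℤ)∖{0}` with `Σ_{i ∈ A} ψ(i)·x̄_i = 0` in `G/qG`. -/
def flowCount (q : ℕ) (X : Fin N → G) (A : Finset (Fin N)) : ℕ :=
  Nat.card {ψ : A → ZMod q //
    (∀ i, ψ i ≠ 0) ∧
    ∑ i : A, (ψ i).val • (QuotientAddGroup.mk (X i.1) : G ⧸ qMul q G) = 0}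

/-- `χ_{X/A}(p)`: the number of proper arithmetic `p`-colorings of the contracted list
`X/A`, i.e. of homomorphisms `φ : G/⟨x_i : i ∈ A⟩ →+ ℤ/pℤ` with `φ(x̄_i) ≠ 0` for `i ∉ A`. -/
def colorCount (p : ℕ) (X : Fin N → G) (A : Finset (Fin N)) : ℕ :=
  Nat.card {φ : (G ⧸ genSub X A) →+ ZMod p //
    ∀ i ∉ A, φ (QuotientAddGroup.mk (X i)) ≠ 0}

/-- `B` is a basis: `rk(B) = |B| = rk(X)`. -/
def IsBasis (X : Fin N → G) (B : Finset (Fin N)) : Prop :=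
  rkA X B = B.card ∧ rkA X B = rkA X univ

/-- `q ∈ ℤ_A(X)`: `q > 0` and `q·G_B = 0` for every basis `B`. -/
def memZA (X : Fin N → G) (q : ℕ) : Prop :=
  0 < q ∧ ∀ B : Finset (Fin N), IsBasis X B →
    ∀ g ∈ AddCommGroup.torsion (G ⧸ genSub X B), q • g = 0

open scoped Classical in
/-- `q ∈ ℤ_M(X)`: `q > 0` and `gcd(q, lcm{m(B) : B basis}) = 1`. -/
def memZM (X : Fin N → G) (q : ℕ) : Prop :=
  0 < q ∧
    Nat.gcd q (((univ : Finset (Fin N)).powerset.filter (fun B => IsBasis X B)).lcm (mA X)) = 1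

lemma aux_rk_quot [AddGroup.FG G] (S : AddSubgroup G) :
    tfRank (G ⧸ S) + tfRank S = tfRank G := by
  have : Module.Finite ℤ G := Module.Finite.iff_addGroup_fg.2 inferInstance
  have h := Submodule.finrank_quotient_add_finrank (AddSubgroup.toIntSubmodule S)
  have e : (G ⧸ AddSubgroup.toIntSubmodule S) ≃+ (G ⧸ S) := AddEquiv.refl (G ⧸ S)
  have := e.toIntLinearEquiv.finrank_eq
  unfold tfRank
  rw [← this]
  exact h

/-- coordinates modulo q -/
lemma aux_coord (H : Type*) [AddCommGroup H] [AddGroup.FG H] (q : ℕ)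
    (hT : ∀ t : H, (∃ k : ℤ, k ≠ 0 ∧ k • t = 0) → ∃ m : ℕ, Nat.Coprime q m ∧ m • t = 0) :
    ∃ π : H →+ (Fin (tfRank H) → ℤ), Function.Surjective π ∧
      ∀ t, π t = 0 → ∃ m : ℕ, Nat.Coprime q m ∧ m • t = 0 := by
  have : Module.Finite ℤ H := Module.Finite.iff_addGroup_fg.2 inferInstance
  let T := Submodule.torsion ℤ H
  have hr : Module.finrank ℤ (H ⧸ T) = tfRank H := by
    have := rank_quotient_eq_of_le_torsion (R := ℤ) (M' := T) le_rfl
    unfold tfRank Module.finrank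
    rw [this]
  let b := Module.finBasisOfFinrankEq ℤ (H ⧸ T) hr
  refine ⟨(b.equivFun.toLinearMap.comp T.mkQ).toAddMonoidHom, ?_, ?_⟩
  · exact b.equivFun.surjective.comp T.mkQ_surjective
  · intro t ht
    apply hT
    have h1 : b.equivFun (T.mkQ t) = 0 := ht
    rw [LinearEquiv.map_eq_zero_iff, Submodule.mkQ_apply, Submodule.Quotient.mk_eq_zero] at h1
    obtain ⟨⟨k, hk⟩, h⟩ := (Submodule.mem_torsion_iff t).1 h1
    exact ⟨k, nonZeroDivisors.ne_zero hk, h⟩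

lemma aux_card_hom (H : Type*) [AddCommGroup H] [AddGroup.FG H] (q : ℕ) 
    (hT : ∀ t : H, (∃ k : ℤ, k ≠ 0 ∧ k • t = 0) → ∃ m : ℕ, Nat.Coprime q m ∧ m • t = 0) :
    Nat.card (H →+ ZMod q) = q ^ tfRank H := by
  obtain ⟨π, hs, hk⟩ := aux_coord H q hT
  have hker : ∀ φ : H →+ ZMod q, ∀ t, π t = 0 → φ t = 0 := by
    intro φ t ht
    obtain ⟨m, hm, h⟩ := hk t ht
    have h2 : (m : ZMod q) * φ t = 0 := by
      rw [← nsmul_eq_mul, ← map_nsmul, h, map_zero]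
    have hu : IsUnit (m : ZMod q) := (ZMod.isUnit_iff_coprime m q).2 hm.symm
    exact (hu.mul_right_eq_zero).1 h2
  let F : ((Fin (tfRank H) → ℤ) →+ ZMod q) → (H →+ ZMod q) := fun f => f.comp π
  have hF : Function.Bijective F := by
    constructor
    · intro f g hfg
      ext1 i
      ext
      obtain ⟨x, hx⟩ := hs (Pi.single i 1)
      have := DFunLike.congr_fun hfg x
      simpa [F, hx] using this
    · intro φ
      refine ⟨π.liftOfSurjective hs ⟨φ, fun t ht => hker φ t ht⟩, ?_⟩
      ext x
      exact AddMonoidHom.liftOfRightInverse_comp_apply _ _ (Function.rightInverse_surjInv hs) ⟨φ, fun t ht => hker φ t ht⟩ x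
  rw [← Nat.card_congr (Equiv.ofBijective F hF)]
  let e : ((Fin (tfRank H) → ℤ) →+ ZMod q) ≃ (Fin (tfRank H) → ZMod q) :=
    (addMonoidHomLequivInt (A := Fin (tfRank H) → ℤ) (B := ZMod q) ℤ).toEquiv.trans
      ((Pi.basisFun ℤ (Fin (tfRank H))).constr ℤ).symm.toEquiv
  rw [Nat.card_congr e]
  simp [Nat.card_pi]

lemma aux_mem_qMul (q : ℕ) (x : G) : x ∈ qMul q G ↔ ∃ y, q • y = x := by
  simp [qMul, AddSubgroup.mem_map]

lemma aux_index (H : Type*) [AddCommGroup H] [AddGroup.FG H] (q : ℕ) 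
    (hT : ∀ t : H, (∃ k : ℤ, k ≠ 0 ∧ k • t = 0) → ∃ m : ℕ, Nat.Coprime q m ∧ m • t = 0) :
    (qMul q H).index = q ^ tfRank H := by
  obtain ⟨π, hs, hk⟩ := aux_coord H q hT
  let ρ : (Fin (tfRank H) → ℤ) →+ (Fin (tfRank H) → ZMod q) := 
    (Int.castAddHom (ZMod q)).compLeft _
  have hρ : Function.Surjective ρ := by
    intro v
    choose w hw using fun i => ZMod.intCast_surjective (v i)
    exact ⟨w, funext hw⟩
  have hker : (ρ.comp π).ker = qMul q H := by
    ext x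
    rw [AddMonoidHom.mem_ker, aux_mem_qMul]
    constructor
    · intro h
      have h1 : ∀ i, ((π x i : ℤ) : ZMod q) = 0 := fun i => congrFun h i
      have h2 : ∀ i, ∃ c : ℤ, π x i = q * c := fun i => (ZMod.intCast_zmod_eq_zero_iff_dvd _ _).1 (h1 i)
      choose c hc using h2
      obtain ⟨y, hy⟩ := hs c
      obtain ⟨m, hm, h⟩ := hk (x - q • y) (by
        rw [map_sub, map_nsmul, hy]; ext i; simp [hc])
      have hb := Nat.gcd_eq_gcd_ab q m
      rw [hm.gcd_eq_one] at hb
      set t := x - q • y with ht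
      refine ⟨y + (Nat.gcdA q m) • t, ?_⟩
      have : t = ((q:ℤ) * Nat.gcdA q m + m * Nat.gcdB q m) • t := by
        rw [← hb]; simp
      rw [add_smul, mul_comm (m:ℤ), mul_smul _ (m:ℤ), natCast_zsmul, h, smul_zero, add_zero, mul_smul, natCast_zsmul] at this
      rw [smul_add, ← this, ht]; abel
    · rintro ⟨y, rfl⟩
      ext i
      simp [ρ]
  rw [← hker, AddSubgroup.index_ker, AddMonoidHom.range_eq_top.2 (show Function.Surjective (ρ ∘ π) from hρ.comp hs)]
  simp [Nat.card_pi]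

lemma aux_genSub_mem (X : Fin N → G) (A : Finset (Fin N)) (g : G) :
    g ∈ genSub X A ↔ g ∈ Submodule.span ℤ (X '' (A : Set (Fin N))) := by
  rw [genSub, ← Submodule.span_int_eq_addSubgroupClosure]; rfl

lemma aux_genSub_mono (X : Fin N → G) {A B : Finset (Fin N)} (h : A ⊆ B) :
    genSub X A ≤ genSub X B :=
  AddSubgroup.closure_mono (Set.image_mono (by exact_mod_cast h))

lemma aux_max (X : Fin N → G) (A A₀ : Finset (Fin N)) (h₀ : A₀ ⊆ A)
    (hi : LinearIndepOn ℤ X (A₀ : Set (Fin N))) :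
    ∃ B, A₀ ⊆ B ∧ B ⊆ A ∧ LinearIndepOn ℤ X (B : Set (Fin N)) ∧
      ∀ g ∈ genSub X A, ∃ k : ℤ, k ≠ 0 ∧ k • g ∈ genSub X B := by
  classical
  let P : Finset (Finset (Fin N)) :=
    A.powerset.filter fun B => A₀ ⊆ B ∧ LinearIndepOn ℤ X (B : Set (Fin N))
  obtain ⟨B, hB, hmax⟩ := P.exists_max_image Finset.card ⟨A₀, by simp [P, h₀, hi]⟩
  have hB' : B ⊆ A ∧ A₀ ⊆ B ∧ LinearIndepOn ℤ X (B : Set (Fin N)) := by simpa [P] using hB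
  obtain ⟨hBA, h0B, hBi⟩ := hB'
  refine ⟨B, h0B, hBA, hBi, ?_⟩
  have key : ∀ i ∈ A, ∃ k : ℤ, k ≠ 0 ∧ k • X i ∈ genSub X B := by
    intro i hiA
    by_cases hiB : i ∈ B
    · exact ⟨1, one_ne_zero, by
        rw [one_smul]; exact AddSubgroup.subset_closure ⟨i, by simpa using hiB, rfl⟩⟩
    have hdep : ¬ LinearIndepOn ℤ X ((insert i B : Finset (Fin N)) : Set (Fin N)) := by
      intro hc
      have := hmax (insert i B) (by
        simp only [P, mem_filter, mem_powerset]
        exact ⟨insert_subset hiA hBA, h0B.trans (subset_insert _ _), hc⟩)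
      rw [card_insert_of_notMem hiB] at this
      omega
    rw [linearIndepOn_iff] at hdep
    push Not at hdep
    obtain ⟨f, hf, hf0, hfne⟩ := hdep
    have hfi : f i ≠ 0 := by
      intro h0
      apply hfne
      apply linearIndepOn_iff.1 hBi f _ hf0
      rw [Finsupp.mem_supported] at hf ⊢
      intro j hj
      have h1 := hf hj
      have hji : j ≠ i := by
        rintro rfl
        simp [h0] at hj
      simpa [hji] using h1
    refine ⟨f i, hfi, ?_⟩
    rw [aux_genSub_mem]
    have h2 : f i • X i = - Finsupp.linearCombination ℤ X (f.erase i) := by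
      rw [eq_neg_iff_add_eq_zero, ← hf0]
      conv_rhs => rw [← Finsupp.single_add_erase i f]
      rw [map_add, Finsupp.linearCombination_single]
    rw [h2]
    apply Submodule.neg_mem
    rw [Finsupp.mem_span_image_iff_linearCombination]
    refine ⟨_, ?_, rfl⟩
    rw [Finsupp.mem_supported] at hf ⊢
    intro j hj
    rw [Finsupp.support_erase] at hj
    simp only [coe_erase, Set.mem_sdiff, Set.mem_singleton_iff] at hj
    have h1 := hf hj.1
    simpa [hj.2] using h1
  intro g hg
  induction hg using AddSubgroup.closure_induction with
  | mem x hx => obtain ⟨i, hi, rfl⟩ := hx; exact key i (by simpa using hi)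
  | zero => exact ⟨1, one_ne_zero, by simp⟩
  | add x y _ _ hx hy =>
    obtain ⟨k, hk, h⟩ := hx
    obtain ⟨l, hl, h'⟩ := hy
    refine ⟨k * l, mul_ne_zero hk hl, ?_⟩
    rw [smul_add]
    apply AddSubgroup.add_mem
    · rw [mul_comm, mul_smul]; exact AddSubgroup.zsmul_mem _ h _
    · rw [mul_smul]; exact AddSubgroup.zsmul_mem _ h' _
  | neg x _ hx =>
    obtain ⟨k, hk, h⟩ := hx
    exact ⟨k, hk, by rw [smul_neg]; exact AddSubgroup.neg_mem _ h⟩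

lemma aux_rk_indep (X : Fin N → G) (B : Finset (Fin N))
    (hi : LinearIndepOn ℤ X (B : Set (Fin N))) : rkA X B = B.card := by
  have h := finrank_span_eq_card hi
  have : Set.range (fun i : (B : Set (Fin N)) => X i) = X '' (B : Set (Fin N)) := by
    ext; simp
  rw [this] at h
  have e : genSub X B ≃+ Submodule.span ℤ (X '' (B : Set (Fin N))) :=
    { toFun := fun g => ⟨g.1, (aux_genSub_mem X B _).1 g.2⟩
      invFun := fun g => ⟨g.1, (aux_genSub_mem X B _).2 g.2⟩
      left_inv := fun _ => rfl
      right_inv := fun _ => rfl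
      map_add' := fun _ _ => rfl }
  have h2 := e.toIntLinearEquiv.finrank_eq
  unfold rkA tfRank
  rw [h2, h]
  simp

lemma aux_fg (X : Fin N → G) (A : Finset (Fin N)) : AddGroup.FG (genSub X A) := by
  rw [AddGroup.fg_iff_addSubgroup_fg]
  exact (AddSubgroup.fg_iff _).2 ⟨_, rfl, (A.finite_toSet.image X)⟩

lemma aux_rk_eq (X : Fin N → G) {A B : Finset (Fin N)} (hAB : B ⊆ A)
    (h : ∀ g ∈ genSub X A, ∃ k : ℤ, k ≠ 0 ∧ k • g ∈ genSub X B) : rkA X A = rkA X B := by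
  have := aux_fg X A
  have hm := aux_genSub_mono X hAB
  let S := (genSub X B).addSubgroupOf (genSub X A)
  have h1 := aux_rk_quot S
  have h2 : tfRank S = rkA X B := by
    exact (AddSubgroup.addSubgroupOfEquivOfLe hm).toIntLinearEquiv.finrank_eq
  have h3 : tfRank (genSub X A ⧸ S) = 0 := by
    apply Module.IsTorsion.finrank_eq_zero
    intro x
    induction x using QuotientAddGroup.induction_on with
    | H g =>
      obtain ⟨k, hk, hg⟩ := h g g.2
      refine ⟨⟨k, mem_nonZeroDivisors_of_ne_zero hk⟩, ?_⟩
      change k • (QuotientAddGroup.mk g : genSub X A ⧸ S) = 0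
      rw [← QuotientAddGroup.mk_zsmul, QuotientAddGroup.eq_zero_iff]
      exact hg
  unfold rkA at *
  omega

lemma aux_sat (X : Fin N → G) {A B : Finset (Fin N)} (hAB : A ⊆ B)
    (hi : LinearIndepOn ℤ X (B : Set (Fin N))) (g : G) (hg : g ∈ genSub X B)
    (k : ℤ) (hk : k ≠ 0) (hkg : k • g ∈ genSub X A) : g ∈ genSub X A := by
  rw [aux_genSub_mem, Finsupp.mem_span_image_iff_linearCombination] at *
  obtain ⟨f, hf, rfl⟩ := hg
  obtain ⟨d, hd, hdf⟩ := hkg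
  refine ⟨f, ?_, rfl⟩
  have h : k • f - d = 0 := by
    apply linearIndepOn_iff.1 hi
    · exact Submodule.sub_mem _ (Submodule.smul_mem _ _ hf)
        (Finsupp.supported_mono (by exact_mod_cast hAB) hd)
    · rw [map_sub, map_smul, hdf, sub_self]
  have h' : k • f = d := sub_eq_zero.1 h
  rw [Finsupp.mem_supported] at hd ⊢
  refine subset_trans ?_ hd
  intro i hi
  rw [← h']
  simp only [mem_coe, Finsupp.mem_support_iff] at hi ⊢
  simpa [hk] using hi

lemma aux_tors (X : Fin N → G) (q : ℕ) (hq : memZM X q) (A : Finset (Fin N)) :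
    ∀ t : G ⧸ genSub X A, (∃ k : ℤ, k ≠ 0 ∧ k • t = 0) →
      ∃ m : ℕ, Nat.Coprime q m ∧ m • t = 0 := by
  classical
  obtain ⟨A₀, -, hA₀, hiA, htA⟩ := aux_max X A ∅ (empty_subset _) (by simp)
  obtain ⟨B, hAB, -, hiB, htB⟩ := aux_max X univ A₀ (subset_univ _) hiA
  have hbasis : IsBasis X B :=
    ⟨aux_rk_indep X B hiB, (aux_rk_eq X (subset_univ _) htB).symm⟩
  intro t
  induction t using QuotientAddGroup.induction_on with
  | H g =>
  rintro ⟨k, hk, h⟩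
  rw [← QuotientAddGroup.mk_zsmul, QuotientAddGroup.eq_zero_iff] at h
  obtain ⟨l, hl, h⟩ := htA _ h
  rw [← mul_smul] at h
  have hlk : l * k ≠ 0 := mul_ne_zero hl hk
  refine ⟨mA X B, ?_, ?_⟩
  · refine Nat.Coprime.coprime_dvd_right (Finset.dvd_lcm ?_) hq.2
    simp [hbasis]
  · have htor : (QuotientAddGroup.mk g : G ⧸ genSub X B) ∈ AddCommGroup.torsion (G ⧸ genSub X B) := by
      change IsOfFinAddOrder _
      rw [isOfFinAddOrder_iff_zsmul_eq_zero]
      refine ⟨l * k, hlk, ?_⟩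
      rw [← QuotientAddGroup.mk_zsmul, QuotientAddGroup.eq_zero_iff]
      exact aux_genSub_mono X hAB h
    have hm : mA X B • (⟨_, htor⟩ : AddCommGroup.torsion (G ⧸ genSub X B)) = 0 :=
      card_nsmul_eq_zero'
    have hm' : mA X B • (QuotientAddGroup.mk g : G ⧸ genSub X B) = 0 := congrArg Subtype.val hm
    rw [← QuotientAddGroup.mk_nsmul, QuotientAddGroup.eq_zero_iff] at hm' ⊢
    apply aux_genSub_mono X hA₀
    apply aux_sat X hAB hiB _ hm' _ hlk
    rw [smul_comm]
    exact AddSubgroup.nsmul_mem _ h _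

lemma aux_rk_le_card (X : Fin N → G) (A : Finset (Fin N)) : rkA X A ≤ A.card := by
  obtain ⟨A₀, -, hA₀, hiA, htA⟩ := aux_max X A ∅ (empty_subset _) (by simp)
  rw [aux_rk_eq X hA₀ htA, aux_rk_indep X A₀ hiA]
  exact card_le_card hA₀

lemma aux_rk_le_univ (X : Fin N → G) (A : Finset (Fin N)) : rkA X A ≤ rkA X univ := by
  obtain ⟨A₀, -, hA₀, hiA, htA⟩ := aux_max X A ∅ (empty_subset _) (by simp)
  obtain ⟨B, hAB, -, hiB, htB⟩ := aux_max X univ A₀ (subset_univ _) hiA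
  rw [aux_rk_eq X hA₀ htA, aux_rk_indep X A₀ hiA, aux_rk_eq X (subset_univ _) htB,
    aux_rk_indep X B hiB]
  exact card_le_card hAB

lemma aux_ie {α : Type*} [Finite α] (P : Fin N → α → Prop) :
    (Nat.card {a // ∀ i, ¬ P i a} : ℤ) =
      ∑ A ∈ (univ : Finset (Fin N)).powerset,
        (-1 : ℤ) ^ A.card * (Nat.card {a // ∀ i ∈ A, P i a} : ℤ) := by
  classical
  have := Fintype.ofFinite α
  simp only [Nat.card_eq_fintype_card, Fintype.card_subtype, Finset.card_filter, Nat.cast_sum,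
    Finset.mul_sum]
  rw [Finset.sum_comm]
  refine Finset.sum_congr rfl fun a _ => ?_
  have h := Finset.prod_one_add (f := fun i => - (if P i a then (1:ℤ) else 0)) univ
  trans ∏ i, (1 + - (if P i a then (1:ℤ) else 0))
  · by_cases hA : ∀ i, ¬ P i a
    · simp [hA]
    · rw [if_neg hA]
      push Not at hA
      obtain ⟨i, hi⟩ := hA
      rw [Finset.prod_eq_zero (mem_univ i)] <;> simp [hi]
  · rw [h]
    refine Finset.sum_congr rfl fun A _ => ?_
    rw [Finset.prod_neg]
    congr 1
    by_cases hA : ∀ i ∈ A, P i a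
    · rw [if_pos hA, Finset.prod_eq_one]
      · simp
      · intro i hi; simp [hA i hi]
    · rw [if_neg hA]
      push Not at hA
      obtain ⟨i, hi, hi'⟩ := hA
      rw [Finset.prod_eq_zero hi] <;> simp [hi']

lemma aux_card_color [AddGroup.FG G] (X : Fin N → G) (q : ℕ) (hq : memZM X q)
    (A : Finset (Fin N)) :
    Nat.card {φ : G →+ ZMod q // ∀ i ∈ A, φ (X i) = 0} = q ^ (tfRank G - rkA X A) := by
  have h1 := aux_card_hom (G ⧸ genSub X A) q (aux_tors X q hq A)
  have h2 := aux_rk_quot (genSub X A)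
  have h3 : tfRank (G ⧸ genSub X A) = tfRank G - rkA X A := by unfold rkA; omega
  rw [← h3, ← h1]
  refine Nat.card_congr
    { toFun := fun φ => QuotientAddGroup.lift (genSub X A) φ.1 ?_
      invFun := fun φ => ⟨φ.comp (QuotientAddGroup.mk' _), ?_⟩
      left_inv := ?_
      right_inv := ?_ }
  · rw [genSub, AddSubgroup.closure_le]
    rintro _ ⟨i, hi, rfl⟩
    exact φ.2 i (by simpa using hi)
  · intro i hi
    have : (QuotientAddGroup.mk (X i) : G ⧸ genSub X A) = 0 :=
      (QuotientAddGroup.eq_zero_iff _).2 (AddSubgroup.subset_closure ⟨i, by simpa using hi, rfl⟩)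
    simp [this]
  · intro φ; ext; rfl
  · intro φ; ext; rfl

lemma aux_index_sup [AddGroup.FG G] (X : Fin N → G) (q : ℕ) (hq : memZM X q)
    (A : Finset (Fin N)) :
    (genSub X A ⊔ qMul q G).index = q ^ (tfRank G - rkA X A) := by
  have h1 := aux_index (G ⧸ genSub X A) q (aux_tors X q hq A)
  have h2 := aux_rk_quot (genSub X A)
  have h3 : tfRank (G ⧸ genSub X A) = tfRank G - rkA X A := by unfold rkA; omega
  rw [← h3, ← h1, ← AddSubgroup.index_comap_of_surjective _
    (QuotientAddGroup.mk'_surjective (genSub X A))]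
  congr 1
  ext g
  rw [AddSubgroup.mem_comap, aux_mem_qMul, AddSubgroup.mem_sup]
  constructor
  · rintro ⟨s, hs, t, ht, rfl⟩
    obtain ⟨y, rfl⟩ := (aux_mem_qMul q t).1 ht
    refine ⟨QuotientAddGroup.mk y, ?_⟩
    rw [map_add, QuotientAddGroup.mk'_apply, QuotientAddGroup.mk'_apply,
      (QuotientAddGroup.eq_zero_iff s).2 hs, zero_add, QuotientAddGroup.mk_nsmul]
  · rintro ⟨y, hy⟩
    induction y using QuotientAddGroup.induction_on with
    | H y =>
    rw [QuotientAddGroup.mk'_apply, ← QuotientAddGroup.mk_nsmul, QuotientAddGroup.eq] at hy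
    exact ⟨-(q • y) + g, hy, q • y, (aux_mem_qMul _ _).2 ⟨y, rfl⟩, by abel⟩

lemma aux_card_flow [AddGroup.FG G] (X : Fin N → G) (q : ℕ) (hq : memZM X q)
    (A : Finset (Fin N)) :
    Nat.card {ψ : A → ZMod q //
      ∑ i : A, (ψ i).val • (QuotientAddGroup.mk (X i.1) : G ⧸ qMul q G) = 0} =
      q ^ (A.card - rkA X A) := by
  have hq0 : NeZero q := ⟨hq.1.ne'⟩
  have hkill : ∀ x : G ⧸ qMul q G, q • x = 0 := by
    intro x
    induction x using QuotientAddGroup.induction_on with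
    | H y =>
    rw [← QuotientAddGroup.mk_nsmul, QuotientAddGroup.eq_zero_iff, aux_mem_qMul]
    exact ⟨y, rfl⟩
  have hadd : ∀ (a b : ZMod q) (x : G ⧸ qMul q G), (a + b).val • x = a.val • x + b.val • x := by
    intro a b x
    rw [← add_smul, ZMod.val_add]
    conv_rhs => rw [← Nat.div_add_mod (a.val + b.val) q, add_smul, mul_comm, mul_smul, hkill,
      smul_zero, zero_add]
  let f : (A → ZMod q) →+ G ⧸ qMul q G := AddMonoidHom.mk'
    (fun ψ => ∑ i : A, (ψ i).val • (QuotientAddGroup.mk (X i.1) : G ⧸ qMul q G)) (by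
      intro a b
      simp [hadd, Finset.sum_add_distrib])
  have hfa : ∀ ψ, f ψ = ∑ i : A, (ψ i).val • (QuotientAddGroup.mk (X i.1) : G ⧸ qMul q G) :=
    fun _ => rfl
  change Nat.card f.ker = _
  have hrange : f.range.comap (QuotientAddGroup.mk' (qMul q G)) = genSub X A ⊔ qMul q G := by
    have hm : f.range = (genSub X A).map (QuotientAddGroup.mk' (qMul q G)) := by
      apply le_antisymm
      · rintro _ ⟨ψ, rfl⟩
        rw [hfa]
        refine AddSubgroup.sum_mem _ fun i _ => AddSubgroup.nsmul_mem _ ?_ _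
        exact ⟨X i.1, AddSubgroup.subset_closure ⟨i.1, by simp, rfl⟩, rfl⟩
      · rw [AddSubgroup.map_le_iff_le_comap, genSub, AddSubgroup.closure_le]
        rintro _ ⟨i, hi, rfl⟩
        have hi' : i ∈ A := by simpa using hi
        classical
        by_cases h1 : q = 1
        · subst h1
          refine ⟨0, ?_⟩
          have := hkill (QuotientAddGroup.mk (X i))
          rw [one_smul] at this
          rw [map_zero]; exact this.symm
        have : Fact (1 < q) := ⟨by have := hq.1; omega⟩
        refine ⟨Pi.single ⟨i, hi'⟩ 1, ?_⟩
        rw [hfa, Finset.sum_eq_single ⟨i, hi'⟩]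
        · simp [ZMod.val_one]
        · intro b _ hb
          simp [Pi.single_eq_of_ne hb]
        · simp
    rw [hm, AddSubgroup.comap_map_eq, QuotientAddGroup.ker_mk']
  have hidx : f.range.index = q ^ (tfRank G - rkA X A) := by
    rw [← aux_index_sup X q hq A, ← hrange, AddSubgroup.index_comap_of_surjective _
      (QuotientAddGroup.mk'_surjective _)]
  have hG : Nat.card (G ⧸ qMul q G) = q ^ (tfRank G) := by
    have h := aux_index_sup X q hq ∅
    have h0 : genSub X ∅ = ⊥ := by simp [genSub]
    have h1 : rkA X ∅ = 0 := by simpa using aux_rk_le_card X ∅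
    rw [h0, h1, bot_sup_eq, Nat.sub_zero] at h
    exact h
  have c1 := AddSubgroup.card_mul_index f.range
  have c2 := AddSubgroup.card_mul_index f.ker
  rw [AddSubgroup.index_ker] at c2
  have c3 : Nat.card (A → ZMod q) = q ^ A.card := by simp
  rw [c3] at c2
  rw [hidx, hG] at c1
  have hle : rkA X A ≤ tfRank G := by
    have := aux_rk_quot (genSub X A)
    unfold rkA; omega
  have hle2 := aux_rk_le_card X A
  have c4 : Nat.card f.range = q ^ rkA X A := by
    apply Nat.eq_of_mul_eq_mul_right (pow_pos hq.1 (tfRank G - rkA X A))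
    rw [c1, ← pow_add]; congr 1; omega
  rw [c4] at c2
  apply Nat.eq_of_mul_eq_mul_right (pow_pos hq.1 (rkA X A))
  rw [c2, ← pow_add]; congr 1; omega

lemma aux_card_flow' [AddGroup.FG G] (X : Fin N → G) (q : ℕ) (hq : memZM X q)
    (A : Finset (Fin N)) :
    Nat.card {a : {ψ : Fin N → ZMod q //
      ∑ i, (ψ i).val • (QuotientAddGroup.mk (X i) : G ⧸ qMul q G) = 0} // ∀ i ∈ A, a.1 i = 0} =
      q ^ (Aᶜ.card - rkA X Aᶜ) := by
  classical
  have hsum : ∀ ψ : Fin N → ZMod q, (∀ i ∈ A, ψ i = 0) →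
      ∑ i, (ψ i).val • (QuotientAddGroup.mk (X i) : G ⧸ qMul q G) =
      ∑ i : (Aᶜ : Finset (Fin N)), (ψ i.1).val • (QuotientAddGroup.mk (X i.1) : G ⧸ qMul q G) := by
    intro ψ h
    rw [Finset.sum_coe_sort Aᶜ
      (fun i => (ψ i).val • (QuotientAddGroup.mk (X i) : G ⧸ qMul q G))]
    symm
    apply Finset.sum_subset (subset_univ _)
    intro i _ hi
    rw [h i (by simpa using hi)]
    simp
  rw [← aux_card_flow X q hq Aᶜ]
  refine Nat.card_congr
    { toFun := fun a => ⟨fun i => a.1.1 i.1, ?_⟩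
      invFun := fun b => ⟨⟨fun i => if h : i ∈ Aᶜ then b.1 ⟨i, h⟩ else 0, ?_⟩, ?_⟩
      left_inv := ?_
      right_inv := ?_ }
  · rw [← hsum _ a.2]; exact a.1.2
  · rw [hsum]
    · refine Eq.trans ?_ b.2
      refine Finset.sum_congr rfl fun i _ => ?_
      rw [dif_pos i.2]
    · intro i hi
      rw [dif_neg (by simpa using hi)]
  · intro i hi
    exact dif_neg (by simpa using hi)
  · intro a
    ext i
    change (if h : i ∈ Aᶜ then a.1.1 i else 0) = a.1.1 i
    split_ifs with h
    · rfl
    · exact (a.2 i (by simpa using h)).symm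
  · intro b
    ext i
    exact dif_pos i.2

lemma aux_sign (a b : ℕ) (h : a % 2 = b % 2) : (-1 : ℤ) ^ a = (-1) ^ b := by
  rw [neg_one_pow_eq_pow_mod_two, h, ← neg_one_pow_eq_pow_mod_two]


/-- **Brändén–Moci: arithmetic colorings and flows via the (classical) Tutte polynomial.**
For `q ∈ ℤ_M(X)`:
`χ_X(q) = (−1)^{rk(X)} q^{rk(G)−rk(X)} T_X(1−q, 0)` and
`χ*_X(q) = (−1)^{N−rk(X)} T_X(0, 1−q)`. -/
theorem colorings_flows_tutte
    (G : Type*) [AddCommGroup G] [AddGroup.FG G] {N : ℕ} (X : Fin N → G)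
    (q : ℕ) (hq : memZM X q) :
    ((Nat.card {φ : G →+ ZMod q // ∀ i, φ (X i) ≠ 0} : ℤ) =
      (-1 : ℤ) ^ (rkA X univ) * (q : ℤ) ^ (tfRank G - rkA X univ) *
        ∑ A ∈ (univ : Finset (Fin N)).powerset,
          ((1 - (q : ℤ)) - 1) ^ (rkA X univ - rkA X A) *
            ((0 : ℤ) - 1) ^ (A.card - rkA X A)) ∧
    ((flowCount q X univ : ℤ) =
      (-1 : ℤ) ^ (N - rkA X univ) *
        ∑ A ∈ (univ : Finset (Fin N)).powerset,
          ((0 : ℤ) - 1) ^ (rkA X univ - rkA X A) *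
            ((1 - (q : ℤ)) - 1) ^ (A.card - rkA X A)) := by
  constructor
  · have hfin : Finite (G →+ ZMod q) := by
      have h := aux_card_color X q hq ∅
      have hne : Nat.card {φ : G →+ ZMod q // ∀ i ∈ (∅ : Finset (Fin N)), φ (X i) = 0} ≠ 0 := by
        rw [h]; exact pow_ne_zero _ hq.1.ne'
      have := Nat.finite_of_card_ne_zero hne
      exact Finite.of_injective
        (fun φ => (⟨φ, by simp⟩ : {φ : G →+ ZMod q // ∀ i ∈ (∅ : Finset (Fin N)), φ (X i) = 0}))
        (fun a b h => congrArg Subtype.val h)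
    rw [aux_ie (fun i (φ : G →+ ZMod q) => φ (X i) = 0), Finset.mul_sum]
    refine Finset.sum_congr rfl fun A _ => ?_
    rw [aux_card_color X q hq A]
    have h1 := aux_rk_le_card X A
    have h2 := aux_rk_le_univ X A
    have h3 : rkA X univ ≤ tfRank G := by
      have := aux_rk_quot (genSub X univ)
      unfold rkA; omega
    obtain ⟨c, hc⟩ := Nat.exists_eq_add_of_le h1
    obtain ⟨d, hd⟩ := Nat.exists_eq_add_of_le h2
    obtain ⟨e, he⟩ := Nat.exists_eq_add_of_le h3
    rw [hc, he, hd]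
    have e1 : rkA X A + d + e - rkA X A = d + e := by omega
    have e2 : rkA X A + d + e - (rkA X A + d) = e := by omega
    rw [e1, e2, Nat.add_sub_cancel_left, Nat.add_sub_cancel_left]
    have e3 : (1 - (q : ℤ) - 1) = (-1) * q := by ring
    rw [e3, mul_pow, zero_sub]
    push_cast
    have e4 : ((-1 : ℤ) ^ d) * (-1) ^ d = 1 := by rw [← mul_pow]; simp
    simp only [pow_add]
    linear_combination (-(-1 : ℤ) ^ rkA X A * (-1) ^ c * q ^ d * q ^ e) * e4
  · have hq0 : NeZero q := ⟨hq.1.ne'⟩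
    have hflow : flowCount q X univ = Nat.card {a : {ψ : Fin N → ZMod q //
        ∑ i, (ψ i).val • (QuotientAddGroup.mk (X i) : G ⧸ qMul q G) = 0} //
          ∀ i, ¬ a.1 i = 0} := by
      have hs : ∀ ψ : Fin N → ZMod q,
          ∑ i : (univ : Finset (Fin N)),
            (ψ i.1).val • (QuotientAddGroup.mk (X i.1) : G ⧸ qMul q G) =
          ∑ i, (ψ i).val • (QuotientAddGroup.mk (X i) : G ⧸ qMul q G) := fun ψ =>
        Finset.sum_coe_sort univ
          (fun i => (ψ i).val • (QuotientAddGroup.mk (X i) : G ⧸ qMul q G))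
      refine Nat.card_congr
        { toFun := fun b => ⟨⟨fun i => b.1 ⟨i, mem_univ i⟩, ?_⟩, fun i => b.2.1 _⟩
          invFun := fun a => ⟨fun i => a.1.1 i.1, fun i => a.2 _, ?_⟩
          left_inv := fun _ => rfl
          right_inv := fun _ => rfl }
      · rw [← hs]; exact b.2.2
      · rw [hs]; exact a.1.2
    rw [hflow, aux_ie (fun i (a : {ψ : Fin N → ZMod q //
        ∑ i, (ψ i).val • (QuotientAddGroup.mk (X i) : G ⧸ qMul q G) = 0}) => a.1 i = 0),
      Finset.mul_sum, Finset.powerset_univ]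
    refine Fintype.sum_equiv (Function.Involutive.toPerm compl compl_involutive) _ _ fun A => ?_
    rw [aux_card_flow' X q hq A]
    change _ = (-1 : ℤ) ^ (N - rkA X univ) * ((0 - 1) ^ (rkA X univ - rkA X Aᶜ) *
      (1 - (q : ℤ) - 1) ^ (Aᶜ.card - rkA X Aᶜ))
    have h1 := aux_rk_le_card X Aᶜ
    have h2 := aux_rk_le_univ X Aᶜ
    have h3 := aux_rk_le_card X univ
    have h4 := Finset.card_add_card_compl A
    simp only [card_univ, Fintype.card_fin] at h3 h4
    have e3 : (1 - (q : ℤ) - 1) = (-1) * q := by ring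
    rw [e3, mul_pow, zero_sub]
    push_cast
    rw [← mul_assoc, ← mul_assoc, ← pow_add, ← pow_add]
    congr 1
    apply aux_sign
    omega

end
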